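/- Let φ be an injective endomorphism of the free group F_n. For every infinite reduced word W, the sequence of reduced words φ(W_i) converges to an infinite reduced word φ̄(W), i.e., |φ(W_i) ∧ φ(W_j)| → ∞ as min(i,j) → ∞ and there is a unique infinite reduced word φ̄(W) with |φ̄(W) ∧ φ(W_i)| → ∞; moreover the resulting map φ̄ on the set of infinite reduced words is injective and continuous with respect to the initial segment metric. -/

import Mathlib

/-!
The argument takes place in the Cayley tree of `F_n`, through the identity
`|g⁻¹ h| = |g| + |h| - 2 |g ∧ h|` (`norm_inv_mul_add`) and two features of an injective `φ`:
the images of adjacent prefixes are at distance at most some `L` (`exists_step_bound`), and `φ` is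
proper, since balls are finite (`exists_norm_bound`).

Properness keeps `φ(V_i)` outside the ball of radius `N + L` as soon as `i ≥ M`, with `M`
independent of `V`. Between points outside this ball a step of length at most `L` cannot change
the first `N` letters, so these letters are the same for all `φ(V_i)` with `i ≥ M`
(`exists_uniform`). This gives the Cauchy property and the limit word, and, because `M` is
uniform in `V`, continuity as well: words that agree up to length `M` have images that agree up
to length `N`.

For injectivity, a path with steps of length at most `L` that converges to `W'` passes within `L`
of every vertex `W'_k` (`exists_close`). If `W` and `V` have the same image `W'`, there are thus
arbitrarily large `i` with some `j` such that `φ(W_i⁻¹ V_j)` has length at most `2 L`. By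
properness `|W_i⁻¹ V_j|` is bounded, which is impossible when `W ≠ V` (`limit_injective`).
-/

open Filter

namespace ZZFix

/-- A letter: a basis element together with a sign. -/
abbrev Letter (α : Type*) := α × Bool

/-- The inverse letter. -/
def linv {α : Type*} (l : Letter α) : Letter α := (l.1, !l.2)

/-- An infinite reduced word: a sequence of letters with no adjacent cancellation. -/
def InfWord (α : Type*) : Type _ := {w : ℕ → Letter α // ∀ i, w (i + 1) ≠ linv (w i)}

/-- The length-`i` prefix of an infinite reduced word, as a list of letters. -/
def prefixList {α : Type*} (W : InfWord α) (i : ℕ) : List (Letter α) :=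
  (List.range i).map W.1

/-- The length-`i` prefix of an infinite reduced word, as an element of the free group. -/
def wordPrefix {α : Type*} (W : InfWord α) (i : ℕ) : FreeGroup α :=
  FreeGroup.mk (prefixList W i)

/-- Length of the longest common prefix of two lists. -/
def commonPrefixLength {β : Type*} [DecidableEq β] : List β → List β → ℕ
  | a :: as, b :: bs => if a = b then commonPrefixLength as bs + 1 else 0
  | _, _ => 0

variable {α : Type*} [DecidableEq α]

/-- `|W ∧ g|` for an infinite reduced word `W` and a finite reduced word `g`. -/
def wedgeF (W : InfWord α) (g : FreeGroup α) : ℕ :=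
  commonPrefixLength (prefixList W (FreeGroup.toWord g).length) (FreeGroup.toWord g)

/-- `|g ∧ h|` for finite reduced words. -/
def wedgeFF (g h : FreeGroup α) : ℕ :=
  commonPrefixLength (FreeGroup.toWord g) (FreeGroup.toWord h)

/-- `|W ∧ V|` for infinite reduced words, valued in `ℕ∞` (it is `⊤` iff `W = V`). -/
noncomputable def wedgeI {α : Type*} (W V : InfWord α) : ℕ∞ :=
  sSup ((fun i : ℕ => (i : ℕ∞)) '' {i : ℕ | prefixList W i = prefixList V i})

/-- A sequence of group elements converges to the infinite reduced word `W`
(in the initial segment metric on `F ⊔ ∂F`). -/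
def ConvergesTo (u : ℕ → FreeGroup α) (W : InfWord α) : Prop :=
  Tendsto (fun i => wedgeF W (u i)) atTop atTop

/-- `W` is a fixed infinite word of `φ`: `|W ∧ φ(W_i)| → ∞`. -/
def IsFixedInfWord (φ : FreeGroup α →* FreeGroup α) (W : InfWord α) : Prop :=
  Tendsto (fun i => wedgeF W (φ (wordPrefix W i))) atTop atTop

/-- `W` is an attracting fixed word of `φ`: it is fixed and `|W ∧ φ(W_i)| - i → +∞`. -/
def IsAttractingFixedWord (φ : FreeGroup α →* FreeGroup α) (W : InfWord α) : Prop :=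
  IsFixedInfWord φ W ∧
    Tendsto (fun i => (wedgeF W (φ (wordPrefix W i)) : ℤ) - (i : ℤ)) atTop atTop

/-- The fixed subgroup of an endomorphism. -/
def fixedSubgroup {G : Type*} [Group G] (φ : G →* G) : Subgroup G where
  carrier := {g | φ g = g}
  one_mem' := map_one φ
  mul_mem' := by
    intro a b ha hb
    simp only [Set.mem_setOf_eq] at *
    rw [map_mul, ha, hb]
  inv_mem' := by
    intro a ha
    simp only [Set.mem_setOf_eq] at *
    rw [map_inv, ha]

/-- The rank (minimal number of generators) of a subgroup, valued in `ℕ∞`. -/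
noncomputable def grpRank {G : Type*} [Group G] (H : Subgroup G) : ℕ∞ :=
  sInf {k : ℕ∞ | ∃ S : Finset G, Subgroup.closure (S : Set G) = H ∧ (S.card : ℕ∞) = k}

/-- Two infinite reduced words are equivalent (w.r.t. `φ`) if `W' = U·W` for some
`U ∈ fix(φ)`, i.e. the reduced products `U·W_i` converge to `W'`. -/
def EquivFixedWords (φ : FreeGroup α →* FreeGroup α) (W W' : InfWord α) : Prop :=
  ∃ U ∈ fixedSubgroup φ, ConvergesTo (fun i => U * wordPrefix W i) W'

/-- `a(φ)`: the number of equivalence classes of attracting fixed words, in `ℕ∞`. -/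
noncomputable def aCard (φ : FreeGroup α →* FreeGroup α) : ℕ∞ :=
  ENat.card (Quot fun (W W' : {W : InfWord α // IsAttractingFixedWord φ W}) =>
    EquivFixedWords φ W.1 W'.1)

/-- The inner automorphism `i_c : g ↦ c g c⁻¹`, as a monoid homomorphism. -/
def innerAut {G : Type*} [Group G] (c : G) : G →* G := (MulAut.conj c).toMonoidHom

/-- Two endomorphisms are similar if `ψ₂ = i_c ∘ ψ₁ ∘ i_c⁻¹` for some `c`. -/
def Similar {G : Type*} [Group G] (ψ₁ ψ₂ : G →* G) : Prop :=
  ∃ c : G, ψ₂ = ((innerAut c).comp ψ₁).comp (innerAut c⁻¹)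

/-- The trace of the endomorphism of `ℤⁿ` induced by `φ` on the abelianization. -/
def abTrace {n : ℕ} (φ : FreeGroup (Fin n) →* FreeGroup (Fin n)) : ℤ :=
  ∑ i : Fin n, Multiplicative.toAdd
    ((FreeGroup.lift fun k => Multiplicative.ofAdd (if k = i then (1 : ℤ) else 0))
      (φ (FreeGroup.of i)))

/-- The constant infinite reduced word `l l l ⋯`. -/
def constWord {α : Type*} (l : Letter α) : InfWord α :=
  ⟨fun _ => l, fun _ h => by
    have h2 := congrArg Prod.snd h
    simp [linv] at h2⟩

/-- `W` is an attracting fixed point of `φ`: it is fixed, and there is `i₀` such that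
every finite or infinite reduced word `V` with `|W ∧ V| ≥ i₀` satisfies
`|W ∧ φᵖ(V)| → ∞` as `p → ∞`. -/
def IsAttractingFixedPoint (φ : FreeGroup α →* FreeGroup α) (W : InfWord α) : Prop :=
  IsFixedInfWord φ W ∧
    ∃ i₀ : ℕ,
      (∀ g : FreeGroup α, i₀ ≤ wedgeF W g →
        Tendsto (fun p => wedgeF W ((⇑φ)^[p] g)) atTop atTop) ∧
      (∀ V : InfWord α, (i₀ : ℕ∞) ≤ wedgeI W V →
        ∀ Vs : ℕ → InfWord α, Vs 0 = V →
          (∀ p, ConvergesTo (fun i => φ (wordPrefix (Vs p) i)) (Vs (p + 1))) →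
          Tendsto (fun p => wedgeI W (Vs p)) atTop atTop)

open scoped Classical in
/-- The initial segment metric. -/
noncomputable def distIS {α : Type*} (W V : InfWord α) : ℝ :=
  if W = V then 0 else 1 / (1 + ((wedgeI W V).toNat : ℝ))


/-! ### Common initial segments -/

/-- Lower bounds on `commonPrefixLength` become equalities of truncated lists, which can be
chained by transitivity. -/
theorem le_commonPrefixLength {β : Type*} [DecidableEq β] (N : ℕ) (l₁ l₂ : List β) :
    N ≤ commonPrefixLength l₁ l₂ ↔
      N ≤ l₁.length ∧ N ≤ l₂.length ∧ l₁.take N = l₂.take N := by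
  induction l₁ generalizing l₂ N with
  | nil => cases N <;> simp [commonPrefixLength]
  | cons a as ih =>
    cases l₂ with
    | nil => cases N <;> simp [commonPrefixLength]
    | cons b bs =>
      cases N with
      | zero => simp
      | succ N =>
        by_cases h : a = b
        · simp [commonPrefixLength, h, ih]
        · simp [commonPrefixLength, h]

/-- Both lists split after their longest common initial segment `w`, and the remainders do not
start with the same letter. -/
theorem exists_split {β : Type*} [DecidableEq β] (l₁ l₂ : List β) :
    ∃ w a b, l₁ = w ++ a ∧ l₂ = w ++ b ∧ w.length = commonPrefixLength l₁ l₂ ∧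
      ∀ x ∈ a.head?, ∀ y ∈ b.head?, x ≠ y := by
  induction l₁ generalizing l₂ with
  | nil => exact ⟨[], [], l₂, by simp [commonPrefixLength]⟩
  | cons a as ih =>
    cases l₂ with
    | nil => exact ⟨[], a :: as, [], by simp [commonPrefixLength]⟩
    | cons b bs =>
      by_cases h : a = b
      · obtain ⟨w, c, d, h₁, h₂, h₃, h₄⟩ := ih bs
        exact ⟨a :: w, c, d, by simp [h₁], by simp [h, h₂], by simp [commonPrefixLength, h, h₃], h₄⟩
      · exact ⟨[], a :: as, b :: bs, by simp [commonPrefixLength, h]⟩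

/-- After the longest common initial segment is cancelled, `g⁻¹ * h` is already reduced; hence
`|g⁻¹ h| = |g| + |h| - 2 |g ∧ h|`. -/
theorem norm_inv_mul_add (g h : FreeGroup α) :
    (g⁻¹ * h).norm + 2 * wedgeFF g h = g.norm + h.norm := by
  obtain ⟨w, a, b, hg, hh, hw, hab⟩ := exists_split g.toWord h.toWord
  have hga : FreeGroup.IsReduced a := (FreeGroup.isReduced_toWord (x := g)).infix ⟨w, [], by simp [hg]⟩
  have hhb : FreeGroup.IsReduced b := (FreeGroup.isReduced_toWord (x := h)).infix ⟨w, [], by simp [hh]⟩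
  have hred : FreeGroup.IsReduced (FreeGroup.invRev a ++ b) := by
    refine List.IsChain.append ?_ hhb ?_
    · have : FreeGroup.reduce (FreeGroup.invRev a) = FreeGroup.invRev a := by rw [FreeGroup.reduce_invRev, hga.reduce_eq]
      exact FreeGroup.isReduced_iff_reduce_eq.2 this
    · intro x hx y hy hxy
      have hx' : (x.1, !x.2) ∈ a.head? := by
        cases a with
        | nil => simp [FreeGroup.invRev] at hx
        | cons c cs =>
          simp [FreeGroup.invRev] at hx
          simp [← hx]
      have := hab _ hx' y hy
      by_contra hne
      apply this
      ext
      · exact hxy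
      · cases hx2 : x.2 <;> cases hy2 : y.2 <;> simp_all
  have hmul : g⁻¹ * h = FreeGroup.mk (FreeGroup.invRev a ++ b) := by
    have e₁ : g = FreeGroup.mk w * FreeGroup.mk a := by rw [FreeGroup.mul_mk, ← hg, FreeGroup.mk_toWord]
    have e₂ : h = FreeGroup.mk w * FreeGroup.mk b := by rw [FreeGroup.mul_mk, ← hh, FreeGroup.mk_toWord]
    rw [e₁, e₂, ← FreeGroup.mul_mk, ← FreeGroup.inv_mk]
    group
  have hn : (g⁻¹ * h).norm = a.length + b.length := by
    rw [hmul, FreeGroup.norm, FreeGroup.toWord_mk, hred.reduce_eq]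
    simp
  rw [hn, wedgeFF, ← hw, FreeGroup.norm, FreeGroup.norm, hg, hh]
  simp only [List.length_append]
  ring

theorem prefixList_length {β : Type*} (W : InfWord β) (i : ℕ) : (prefixList W i).length = i := by
  simp [prefixList]

theorem take_prefixList {β : Type*} (W : InfWord β) {i j : ℕ} (h : i ≤ j) :
    (prefixList W j).take i = prefixList W i := by
  simp [prefixList, ← List.map_take, List.take_range, h]

theorem prefixList_eq_iff {β : Type*} (W V : InfWord β) (N : ℕ) :
    prefixList W N = prefixList V N ↔ ∀ i < N, W.1 i = V.1 i := by
  simp [prefixList]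

theorem infWord_ext {β : Type*} {W V : InfWord β} (h : ∀ N, prefixList W N = prefixList V N) : W = V := by
  apply Subtype.ext
  funext i
  exact (prefixList_eq_iff W V (i + 1)).1 (h _) i (by omega)

theorem le_wedgeF (W : InfWord α) (g : FreeGroup α) (N : ℕ) :
    N ≤ wedgeF W g ↔ N ≤ g.norm ∧ g.toWord.take N = prefixList W N := by
  rw [wedgeF, le_commonPrefixLength, prefixList_length]
  constructor
  · rintro ⟨h, -, h'⟩
    exact ⟨h, by rw [← h', take_prefixList W h]⟩
  · rintro ⟨h, h'⟩
    exact ⟨h, h, (take_prefixList W h).trans h'.symm⟩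

theorem le_wedgeFF (g h : FreeGroup α) (N : ℕ) :
    N ≤ wedgeFF g h ↔ N ≤ g.norm ∧ N ≤ h.norm ∧ g.toWord.take N = h.toWord.take N :=
  le_commonPrefixLength N _ _

theorem convergesTo_iff (u : ℕ → FreeGroup α) (W : InfWord α) :
    ConvergesTo u W ↔
      ∀ N, ∃ M, ∀ i ≥ M, N ≤ (u i).norm ∧ (u i).toWord.take N = prefixList W N := by
  simp only [ConvergesTo, tendsto_atTop_atTop, le_wedgeF]

theorem isReduced_prefixList {β : Type*} (W : InfWord β) (i : ℕ) : FreeGroup.IsReduced (prefixList W i) := by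
  rw [FreeGroup.IsReduced, List.isChain_iff_getElem]
  intro k hk h
  simp only [prefixList, List.getElem_map, List.getElem_range] at h ⊢
  have := W.2 k
  by_contra hne
  apply this
  ext
  · exact h.symm
  · simp only [linv]
    cases hx2 : (W.1 k).2 <;> cases hy2 : (W.1 (k + 1)).2 <;> simp_all

theorem toWord_wordPrefix (W : InfWord α) (i : ℕ) : (wordPrefix W i).toWord = prefixList W i := by
  rw [wordPrefix, FreeGroup.toWord_mk, (isReduced_prefixList W i).reduce_eq]

theorem norm_wordPrefix (W : InfWord α) (i : ℕ) : (wordPrefix W i).norm = i := by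
  rw [FreeGroup.norm, toWord_wordPrefix, prefixList_length]

theorem wordPrefix_succ {β : Type*} (W : InfWord β) (i : ℕ) :
    wordPrefix W (i + 1) = wordPrefix W i * FreeGroup.mk [W.1 i] := by
  simp [wordPrefix, prefixList, List.range_succ]

/-! ### The initial segment metric -/

theorem prefixList_eq_of_distIS_lt {β : Type*} {W V : InfWord β} {M : ℕ}
    (h : distIS W V < 1 / (1 + (M : ℝ))) : prefixList W M = prefixList V M := by
  by_cases hWV : W = V
  · rw [hWV]
  rw [distIS, if_neg hWV, one_div_lt_one_div (by positivity) (by positivity)] at h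
  have hlt : M < (wedgeI W V).toNat := by exact_mod_cast lt_of_add_lt_add_left h
  have hlt' : (M : ℕ∞) < wedgeI W V :=
    lt_of_lt_of_le (by exact_mod_cast hlt) (ENat.natCast_toNat_le_self _)
  obtain ⟨_, ⟨i, hi, rfl⟩, hMi⟩ := lt_sSup_iff.1 hlt'
  have hMi' : M ≤ i := Nat.cast_le.1 hMi.le
  rw [← take_prefixList W hMi', ← take_prefixList V hMi', hi]

theorem distIS_le_of_prefixList_eq {β : Type*} {W V : InfWord β} {N : ℕ}
    (h : prefixList W N = prefixList V N) : distIS W V ≤ 1 / ((N : ℝ) + 1) := by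
  by_cases hWV : W = V
  · rw [distIS, if_pos hWV]; positivity
  rw [distIS, if_neg hWV, add_comm]
  -- `W ≠ V` makes `wedgeI W V` finite, so `toNat` does not return its junk value.
  have hfin : wedgeI W V ≠ ⊤ := by
    obtain ⟨p, hp⟩ : ∃ p, prefixList W p ≠ prefixList V p := by
      by_contra! hc
      exact hWV (infWord_ext hc)
    have : wedgeI W V ≤ p := by
      refine sSup_le ?_
      rintro _ ⟨i, hi, rfl⟩
      by_contra! hlt
      have hpi : p ≤ i := by exact_mod_cast hlt.le
      exact hp (by rw [← take_prefixList W hpi, ← take_prefixList V hpi, hi])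
    exact ne_top_of_le_ne_top (ENat.natCast_ne_top p) this
  have hN : (N : ℕ∞) ≤ wedgeI W V := le_sSup ⟨N, h, rfl⟩
  have hN' : N ≤ (wedgeI W V).toNat := by
    rw [← ENat.natCast_toNat hfin] at hN
    exact_mod_cast hN
  gcongr

/-! ### Images of prefixes under an injective endomorphism -/

/-- An endomorphism moves adjacent prefixes to elements at bounded distance. -/
theorem exists_step_bound {n : ℕ} (φ : FreeGroup (Fin n) →* FreeGroup (Fin n)) :
    ∃ L, ∀ (W : InfWord (Fin n)) (i : ℕ),
      ((φ (wordPrefix W i))⁻¹ * φ (wordPrefix W (i + 1))).norm ≤ L := by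
  obtain ⟨L, hL⟩ := (Set.finite_range fun x : Letter (Fin n) => (φ (FreeGroup.mk [x])).norm).bddAbove
  refine ⟨L, fun W i => ?_⟩
  rw [wordPrefix_succ, map_mul, inv_mul_cancel_left]
  exact hL ⟨W.1 i, rfl⟩

/-- An injective endomorphism is proper for word length, because balls in a free group of finite
rank are finite. -/
theorem exists_norm_bound {n : ℕ} (φ : FreeGroup (Fin n) →* FreeGroup (Fin n))
    (hφ : Function.Injective φ) (R : ℕ) : ∃ C, ∀ g, (φ g).norm ≤ R → g.norm ≤ C := by
  have hball : {g : FreeGroup (Fin n) | g.norm ≤ R}.Finite :=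
    (List.finite_length_le (Letter (Fin n)) R).preimage FreeGroup.toWord_injective.injOn
  have hfin : {g : FreeGroup (Fin n) | (φ g).norm ≤ R}.Finite := hball.preimage hφ.injOn
  obtain ⟨C, hC⟩ := (hfin.image FreeGroup.norm).bddAbove
  exact ⟨C, fun g hg => hC ⟨g, hg, rfl⟩⟩

/-- The index `M` depends on `N` but not on `V`; this uniformity gives continuity. The path
`φ(V_M), φ(V_{M+1}), …` has steps of length at most `L` and stays outside the ball of radius
`N + L`, so by `norm_inv_mul_add` no step can change the first `N` letters. -/
theorem exists_uniform {n : ℕ} (φ : FreeGroup (Fin n) →* FreeGroup (Fin n))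
    (hφ : Function.Injective φ) (N : ℕ) :
    ∃ M, ∀ V : InfWord (Fin n), ∀ i ≥ M, N ≤ (φ (wordPrefix V i)).norm ∧
      (φ (wordPrefix V i)).toWord.take N = (φ (wordPrefix V M)).toWord.take N := by
  obtain ⟨L, hL⟩ := exists_step_bound φ
  obtain ⟨C, hC⟩ := exists_norm_bound φ hφ (N + L)
  have hbig : ∀ (V : InfWord (Fin n)), ∀ i ≥ C + 1, N + L < (φ (wordPrefix V i)).norm := by
    intro V i hi
    by_contra! h
    have := hC _ h
    rw [norm_wordPrefix] at this
    omega
  refine ⟨C + 1, fun V i hi => ⟨by have := hbig V i hi; omega, ?_⟩⟩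
  induction i, hi using Nat.le_induction with
  | base => rfl
  | succ i hi ih =>
    rw [← ih]
    have h₁ := norm_inv_mul_add (φ (wordPrefix V i)) (φ (wordPrefix V (i + 1)))
    have h₂ := hL V i
    have h₃ := hbig V i hi
    have h₄ := hbig V (i + 1) (by omega)
    exact ((le_wedgeFF _ _ N).1 (by omega)).2.2.symm

/-- A sequence of group elements whose initial segments stabilise converges. -/
theorem exists_limit (u : ℕ → FreeGroup α)
    (hu : ∀ N, ∃ M, ∀ i ≥ M, N ≤ (u i).norm ∧ (u i).toWord.take N = (u M).toWord.take N) :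
    ∃ W, ConvergesTo u W := by
  choose M hM using hu
  have hlen : ∀ k, k < (u (M (k + 1))).toWord.length := fun k => (hM (k + 1) _ le_rfl).1
  have hget : ∀ k, ∀ i ≥ M (k + 1), ∀ h : k < (u i).toWord.length,
      (u i).toWord[k] = (u (M (k + 1))).toWord[k]'(hlen k) := by
    intro k i hi h
    have := (hM (k + 1) i hi).2
    have h' := congrArg (fun l => l[k]?) this
    simp only [List.getElem?_take, Nat.lt_succ_self, if_true] at h'
    rw [List.getElem?_eq_getElem h, List.getElem?_eq_getElem (hlen k)] at h'
    exact Option.some.inj h'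
  obtain ⟨W, hW⟩ : ∃ W : InfWord α, ∀ k, W.1 k = (u (M (k + 1))).toWord[k]'(hlen k) := by
    refine ⟨⟨fun k => (u (M (k + 1))).toWord[k]'(hlen k), ?_⟩, fun _ => rfl⟩
    intro k hk
    beta_reduce at hk
    set i := max (M (k + 1)) (M (k + 2))
    have hl : k + 1 < (u i).toWord.length := (hM (k + 2) i (le_max_right _ _)).1
    have hr := FreeGroup.isReduced_toWord (x := u i)
    rw [FreeGroup.IsReduced, List.isChain_iff_getElem] at hr
    have := hr k hl
    rw [hget k i (le_max_left _ _) (by omega), hget (k + 1) i (le_max_right _ _) hl, hk] at this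
    simp [linv] at this
  refine ⟨W, (convergesTo_iff u W).2 fun N => ?_⟩
  refine ⟨max (M N) ((Finset.range N).sup fun k => M (k + 1)), fun i hi => ?_⟩
  have hN : N ≤ (u i).toWord.length := (hM N i (le_trans (le_max_left _ _) hi)).1
  refine ⟨hN, List.ext_getElem ?_ fun k h₁ h₂ => ?_⟩
  · simp [prefixList_length, hN]
  · rw [prefixList_length] at h₂
    have hk : M (k + 1) ≤ i := by
      refine le_trans ?_ (le_trans (le_max_right _ _) hi)
      exact Finset.le_sup (f := fun k => M (k + 1)) (Finset.mem_range.2 h₂)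
    simp only [List.getElem_take, prefixList, List.getElem_map, List.getElem_range, hW]
    exact hget k i hk (by omega)

theorem limit_unique {u : ℕ → FreeGroup α} {W V : InfWord α}
    (hW : ConvergesTo u W) (hV : ConvergesTo u V) : W = V := by
  rw [convergesTo_iff] at hW hV
  apply infWord_ext
  intro N
  obtain ⟨M₁, h₁⟩ := hW N
  obtain ⟨M₂, h₂⟩ := hV N
  rw [← (h₁ _ (le_max_left M₁ M₂)).2, (h₂ _ (le_max_right M₁ M₂)).2]

/-- The path `φ(W_i)` starts at `1` and converges to `W'`, with steps of length at most `L`.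
The step at which it first acquires the initial segment `W'_k` runs, in the Cayley tree, through
the vertex `W'_k`, so its endpoint lies within `L` of `W'_k`. The index of this endpoint is at
least `k / L`. -/
theorem exists_close {n : ℕ} (φ : FreeGroup (Fin n) →* FreeGroup (Fin n)) {L : ℕ}
    {W W' : InfWord (Fin n)}
    (hL : ∀ i : ℕ, ((φ (wordPrefix W i))⁻¹ * φ (wordPrefix W (i + 1))).norm ≤ L)
    (hW : ConvergesTo (fun i => φ (wordPrefix W i)) W') {k : ℕ} (hk : 0 < k) :
    ∃ i, k ≤ L * i ∧ ((wordPrefix W' k)⁻¹ * φ (wordPrefix W i)).norm ≤ L := by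
  classical
  have hlin : ∀ i, (φ (wordPrefix W i)).norm ≤ L * i := by
    intro i
    induction i with
    | zero => simp [wordPrefix, prefixList, ← FreeGroup.one_eq_mk]
    | succ i ih =>
      have := FreeGroup.norm_mul_le (φ (wordPrefix W i))
        ((φ (wordPrefix W i))⁻¹ * φ (wordPrefix W (i + 1)))
      rw [mul_inv_cancel_left] at this
      have := hL i
      rw [Nat.mul_succ]
      omega
  have hex : ∃ i, k ≤ (φ (wordPrefix W i)).norm ∧
      (φ (wordPrefix W i)).toWord.take k = prefixList W' k := by
    obtain ⟨M, hM⟩ := (convergesTo_iff _ _).1 hW k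
    exact ⟨M, hM M le_rfl⟩
  obtain ⟨hlen, htake⟩ := Nat.find_spec hex
  refine ⟨Nat.find hex, hlen.trans (hlin _), ?_⟩
  rcases hf : Nat.find hex with _ | j
  · rw [hf] at hlen
    have := hlin 0
    omega
  have hmin := Nat.find_min hex (m := j) (by omega)
  rw [hf] at hlen htake
  -- `|W'_k ∧ φ(W_{j+1})| = k`, so the distance from `W'_k` to `φ(W_{j+1})` is `|φ(W_{j+1})| - k`.
  have hw : k ≤ wedgeFF (wordPrefix W' k) (φ (wordPrefix W (j + 1))) := by
    rw [le_wedgeFF, norm_wordPrefix, toWord_wordPrefix, htake, take_prefixList _ le_rfl]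
    exact ⟨le_rfl, hlen, rfl⟩
  have h₁ := norm_inv_mul_add (wordPrefix W' k) (φ (wordPrefix W (j + 1)))
  rw [norm_wordPrefix] at h₁
  have h₂ := norm_inv_mul_add (φ (wordPrefix W j)) (φ (wordPrefix W (j + 1)))
  have h₃ := hL j
  have h₄ : wedgeFF (φ (wordPrefix W j)) (φ (wordPrefix W (j + 1))) < k := by
    by_contra! h
    obtain ⟨a, -, c⟩ := (le_wedgeFF _ _ k).1 h
    exact hmin ⟨a, c.trans htake⟩
  have h₅ : wedgeFF (φ (wordPrefix W j)) (φ (wordPrefix W (j + 1))) ≤ (φ (wordPrefix W j)).norm :=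
    ((le_wedgeFF _ _ _).1 le_rfl).1
  omega

/-- If `W` and `V` had the same image `W'`, the vertices `W'_k` would lie close both to some
`φ(W_i)` and to some `φ(V_j)` with `i → ∞`; properness of `φ` then bounds `|W_i⁻¹ V_j|`, hence
also `i` once `W` and `V` diverge. -/
theorem limit_injective {n : ℕ} (φ : FreeGroup (Fin n) →* FreeGroup (Fin n))
    (hφ : Function.Injective φ) {W V W' : InfWord (Fin n)}
    (hW : ConvergesTo (fun i => φ (wordPrefix W i)) W')
    (hV : ConvergesTo (fun i => φ (wordPrefix V i)) W') : W = V := by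
  obtain ⟨L, hL⟩ := exists_step_bound φ
  obtain ⟨C, hC⟩ := exists_norm_bound φ hφ (L + L)
  by_contra hne
  obtain ⟨p, hp⟩ : ∃ p, prefixList W p ≠ prefixList V p := by
    by_contra! hc
    exact hne (infWord_ext hc)
  -- `k > L * (C + p)` forces `i > C + p`.
  obtain ⟨i, hi, hWi⟩ := exists_close φ (hL W) hW (k := L * (C + p) + 1) (by omega)
  obtain ⟨j, -, hVj⟩ := exists_close φ (hL V) hV (k := L * (C + p) + 1) (by omega)
  have hip : C + p < i := by
    by_contra! h
    have := Nat.mul_le_mul_left L h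
    omega
  have hclose : ((wordPrefix W i)⁻¹ * wordPrefix V j).norm ≤ C := by
    apply hC
    set c := wordPrefix W' (L * (C + p) + 1)
    have e : φ ((wordPrefix W i)⁻¹ * wordPrefix V j) =
        (c⁻¹ * φ (wordPrefix W i))⁻¹ * (c⁻¹ * φ (wordPrefix V j)) := by
      rw [map_mul, map_inv]; group
    rw [e]
    refine (FreeGroup.norm_mul_le _ _).trans ?_
    rw [FreeGroup.norm_inv_eq]
    exact add_le_add hWi hVj
  have hw : wedgeFF (wordPrefix W i) (wordPrefix V j) < p := by
    by_contra! h
    obtain ⟨a, b, c⟩ := (le_wedgeFF _ _ p).1 h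
    rw [norm_wordPrefix] at a b
    rw [toWord_wordPrefix, toWord_wordPrefix, take_prefixList _ a, take_prefixList _ b] at c
    exact hp c
  have hwj : wedgeFF (wordPrefix W i) (wordPrefix V j) ≤ j := by
    have := ((le_wedgeFF (wordPrefix W i) (wordPrefix V j) _).1 le_rfl).2.1
    rwa [norm_wordPrefix] at this
  have := norm_inv_mul_add (wordPrefix W i) (wordPrefix V j)
  rw [norm_wordPrefix, norm_wordPrefix] at this
  omega

/-- Lemma 2.1: `φ` extends to a continuous injective map on
infinite reduced words. -/
theorem stmt4 {n : ℕ} (φ : FreeGroup (Fin n) →* FreeGroup (Fin n))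
    (hφ : Function.Injective φ) :
    (∀ W : InfWord (Fin n),
      (∀ N : ℕ, ∃ M : ℕ, ∀ i ≥ M, ∀ j ≥ M,
        N ≤ wedgeFF (φ (wordPrefix W i)) (φ (wordPrefix W j))) ∧
      (∃! W' : InfWord (Fin n), ConvergesTo (fun i => φ (wordPrefix W i)) W')) ∧
    (∀ W V W' V' : InfWord (Fin n),
      ConvergesTo (fun i => φ (wordPrefix W i)) W' →
      ConvergesTo (fun i => φ (wordPrefix V i)) V' → W' = V' → W = V) ∧
    (∀ W W' : InfWord (Fin n), ConvergesTo (fun i => φ (wordPrefix W i)) W' →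
      ∀ ε : ℝ, 0 < ε → ∃ δ : ℝ, 0 < δ ∧ ∀ V V' : InfWord (Fin n),
        ConvergesTo (fun i => φ (wordPrefix V i)) V' →
        distIS W V < δ → distIS W' V' < ε) := by
  refine ⟨fun W => ⟨fun N => ?_, ?_⟩, ?_, ?_⟩
  · obtain ⟨M, hM⟩ := exists_uniform φ hφ N
    refine ⟨M, fun i hi j hj => ?_⟩
    obtain ⟨h₁, h₂⟩ := hM W i hi
    obtain ⟨h₃, h₄⟩ := hM W j hj
    exact (le_wedgeFF _ _ N).2 ⟨h₁, h₃, h₂.trans h₄.symm⟩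
  · obtain ⟨W', hW'⟩ := exists_limit (fun i => φ (wordPrefix W i)) fun N =>
      (exists_uniform φ hφ N).imp fun M hM => hM W
    exact ⟨W', hW', fun V' hV' => limit_unique hV' hW'⟩
  · rintro W V W' _ hW hV rfl
    exact limit_injective φ hφ hW hV
  · intro W W' hW ε hε
    obtain ⟨N, hN⟩ := exists_nat_one_div_lt hε
    obtain ⟨M, hM⟩ := exists_uniform φ hφ N
    refine ⟨1 / (1 + (M : ℝ)), by positivity, fun V V' hV hd => ?_⟩
    refine (distIS_le_of_prefixList_eq ?_).trans_lt hN
    have hM' : wordPrefix W M = wordPrefix V M := by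
      rw [wordPrefix, wordPrefix, prefixList_eq_of_distIS_lt hd]
    obtain ⟨A, hA⟩ := (convergesTo_iff _ _).1 hW N
    obtain ⟨B, hB⟩ := (convergesTo_iff _ _).1 hV N
    rw [← (hA _ (le_max_left A M)).2, ← (hB _ (le_max_left B M)).2,
      (hM W _ (le_max_right A M)).2, (hM V _ (le_max_right B M)).2, hM']

end ZZFix
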